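/- Let a,b,c,i,j,k ∈ ℤ_{≥0} satisfy a + b = i + j and b + c = j + k. Then the following identity holds in K = ℚ(q): q^{(a−j)(c−j)} · P_b(q^{2i},q^{2j},q^{2k}) / (q²;q²)_b = ∑_{μ=0}^{min(b,i)} (−1)^{b−μ} · q^{ik + b + (b−μ)(c−a) + μ(μ−i−k−1)} · [(q²;q²)_{a+b−μ} / ((q²;q²)_{b−μ}·(q²;q²)_a)] · [(q²;q²)_i / ((q²;q²)_μ·(q²;q²)_{i−μ})], where P_b(q^{2i},q^{2j},q^{2k}) ∈ K denotes the evaluation of P_b at x = q^{2i}, y = q^{2j}, z = q^{2k}, and (a;p)_n = ∏_{j=0}^{n−1}(1 − a·p^j), with exponents of q interpreted as integers (possibly negative). -/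

import Mathlib

noncomputable section

open MvPolynomial

/-- The field `K = ℚ(q)` of rational functions in `q` over `ℚ`. -/
abbrev K : Type := RatFunc ℚ

/-- The variable `q ∈ K = ℚ(q)`. -/
def q : K := RatFunc.X

/-- The polynomial ring `K[x,y,z]`. -/
abbrev P3 : Type := MvPolynomial (Fin 3) K

/-- The polynomials `P_b(x,y,z)`, defined by `P_0 = 1` and
`P_{b+1}(x,y,z) = (1−z)·P_b(x,y,q^{−2}z) − q^{−2b}·x·(1 − q^{−2b}·y·z)·P_b(x,y,z)`. -/
def P : ℕ → P3
  | 0 => 1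
  | b + 1 =>
      (1 - X 2) * (aeval ![(X 0 : P3), X 1, C (q ^ (-2 : ℤ)) * X 2] (P b))
    - C (q ^ (-2 * (b : ℤ))) * X 0 * (1 - C (q ^ (-2 * (b : ℤ))) * X 1 * X 2) * P b

open Finset in
/-- The q-Pochhammer symbol `(a;p)_n = ∏_{j<n} (1 − a·p^j)` in `K`. -/
def poch (a p : K) (n : ℕ) : K := ∏ j ∈ range n, (1 - a * p ^ j)

/-- `(q²;q²)_n`. -/
def q2p (n : ℕ) : K := poch (q ^ 2) (q ^ 2) n

/-!
Write `p = q²` and `w = x y`. The coefficient of `zⁿ` in `P_b` factors completely: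
it is `(-1)ⁿ q^{n(n+1-2b)} [b, n]_p (x; p⁻¹)_{b-n} (w p^{1-b}; p)_n`. After the common factors are
removed, the recursion defining `P_{b+1}` is an identity of degree one in `w`, whose constant term
and linear term are the two `q`-Pascal rules. At `x = p^i` and `w = p^{a+b}` each Pochhammer symbol
is a ratio of values of `(p; p)`, and `(p^i; p⁻¹)_μ` vanishes for `μ > i`, which truncates the sum
over `μ = b - n` at `min b i`.
-/

section GaussBinom

variable {R : Type*}

/-- The Gaussian binomial coefficient `[n, k]_p`, defined by the `q`-Pascal rule so that it makes
sense for every `p`, including roots of unity, and vanishes for `k > n`. -/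
def gaussBinom [CommSemiring R] (p : R) : ℕ → ℕ → R
  | _, 0 => 1
  | 0, _ + 1 => 0
  | n + 1, k + 1 => p ^ (k + 1) * gaussBinom p n (k + 1) + gaussBinom p n k

@[simp]
lemma gaussBinom_zero_right [CommSemiring R] (p : R) (n : ℕ) : gaussBinom p n 0 = 1 := by
  cases n <;> rfl

lemma gaussBinom_succ_succ [CommSemiring R] (p : R) (n k : ℕ) :
    gaussBinom p (n + 1) (k + 1) = p ^ (k + 1) * gaussBinom p n (k + 1) + gaussBinom p n k :=
  rfl

lemma gaussBinom_eq_zero_of_lt [CommSemiring R] (p : R) {n k : ℕ} (h : n < k) :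
    gaussBinom p n k = 0 := by
  induction n generalizing k with
  | zero => obtain _ | k := k; exacts [absurd h (lt_irrefl 0), rfl]
  | succ n ih =>
    obtain _ | k := k
    · exact absurd h (Nat.not_lt_zero _)
    · rw [gaussBinom_succ_succ, ih (by lia), ih (by lia), mul_zero, add_zero]

lemma one_sub_pow_mul_gaussBinom_succ_right [CommRing R] (p : R) (k m : ℕ) :
    (1 - p ^ (k + 1)) * gaussBinom p (k + m) (k + 1) = (1 - p ^ m) * gaussBinom p (k + m) k := by
  induction m generalizing k with
  | zero => simp [gaussBinom_eq_zero_of_lt]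
  | succ m ihm =>
    induction k with
    | zero =>
      have h := ihm 0
      simp only [zero_add, gaussBinom_zero_right, gaussBinom_succ_succ] at h ⊢
      linear_combination p * h
    | succ k ihk =>
      have h := ihm (k + 1)
      rw [show k + 1 + m = k + (m + 1) by ring] at h
      rw [show k + 1 + (m + 1) = k + (m + 1) + 1 by ring, gaussBinom_succ_succ p _ (k + 1),
        gaussBinom_succ_succ p _ k]
      linear_combination p ^ (k + 2) * h + ihk

lemma gaussBinom_succ_succ' [CommRing R] (p : R) (k m : ℕ) :
    gaussBinom p (k + m + 1) (k + 1) =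
      gaussBinom p (k + m) (k + 1) + p ^ m * gaussBinom p (k + m) k := by
  rw [gaussBinom_succ_succ]
  linear_combination -one_sub_pow_mul_gaussBinom_succ_right p k m

lemma one_sub_pow_mul_gaussBinom_succ_succ [CommRing R] (p : R) (k m : ℕ) :
    (1 - p ^ (k + 1)) * gaussBinom p (k + m + 1) (k + 1) =
      (1 - p ^ (k + m + 1)) * gaussBinom p (k + m) k := by
  rw [gaussBinom_succ_succ]
  linear_combination p ^ (k + 1) * one_sub_pow_mul_gaussBinom_succ_right p k m

end GaussBinom

section Poch

variable (a p : K)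

@[simp]
lemma poch_zero : poch a p 0 = 1 :=
  Finset.prod_range_zero _

lemma poch_succ (n : ℕ) : poch a p (n + 1) = poch a p n * (1 - a * p ^ n) :=
  Finset.prod_range_succ _ n

lemma poch_add (m n : ℕ) : poch a p (m + n) = poch a p m * poch (a * p ^ m) p n := by
  simp only [poch, Finset.prod_range_add, pow_add, mul_assoc]

lemma poch_succ' (n : ℕ) : poch a p (n + 1) = (1 - a) * poch (a * p) p n := by
  simpa [poch_succ, add_comm] using poch_add a p 1 n

variable {p}

lemma poch_pow_inv_mul_poch_self (hp : p ≠ 0) (m n : ℕ) :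
    poch (p ^ (m + n)) p⁻¹ n * poch p p m = poch p p (m + n) := by
  induction n with
  | zero => simp
  | succ n ih =>
    have hshift : p ^ (m + (n + 1)) * p⁻¹ = p ^ (m + n) := by
      rw [← add_assoc, pow_succ, mul_inv_cancel_right₀ hp]
    rw [poch_succ', hshift, mul_assoc, ih, ← add_assoc, poch_succ, pow_succ]
    ring

lemma poch_pow_inv_eq_zero (hp : p ≠ 0) {i n : ℕ} (h : i < n) : poch (p ^ i) p⁻¹ n = 0 :=
  Finset.prod_eq_zero (Finset.mem_range.mpr h) (by simp [hp])

variable (p)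

lemma gaussBinom_mul_poch_mul_poch (k m : ℕ) :
    gaussBinom p (k + m) k * (poch p p k * poch p p m) = poch p p (k + m) := by
  induction k with
  | zero => simp
  | succ k ih =>
    rw [add_right_comm, poch_succ p p k, poch_succ p p (k + m), ← ih, ← pow_succ', ← pow_succ']
    linear_combination poch p p k * poch p p m * one_sub_pow_mul_gaussBinom_succ_succ p k m

end Poch

lemma q_ne_zero : q ≠ 0 :=
  RatFunc.X_ne_zero

lemma q_pow_ne_one {m : ℕ} (hm : m ≠ 0) : q ^ m ≠ 1 := by
  intro h
  have hX : (Polynomial.X : Polynomial ℚ) ^ m = 1 :=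
    RatFunc.algebraMap_injective ℚ (by rw [map_pow, RatFunc.algebraMap_X, map_one]; exact h)
  simpa [hm] using congrArg Polynomial.natDegree hX

lemma q2p_ne_zero (n : ℕ) : q2p n ≠ 0 := by
  rw [q2p, poch, Finset.prod_ne_zero_iff]
  intro j _
  rw [← pow_succ', ← pow_mul, sub_ne_zero]
  exact (q_pow_ne_one (mul_ne_zero two_ne_zero j.succ_ne_zero)).symm

/-- The coefficient of `zⁿ` in `P_b(x, y, z)`, where `w` stands for `x y`. For `n > b`, where the
subtraction `b - n` truncates, it vanishes because the Gaussian binomial does. -/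
def zCoeff (x w : K) (b n : ℕ) : K :=
  (-1) ^ n * (q ^ (n * (n + 1)) / q ^ (2 * n * b)) * gaussBinom (q ^ 2) b n
    * poch x (q ^ 2)⁻¹ (b - n) * poch (w * q ^ 2 / q ^ (2 * b)) (q ^ 2) n

section ZCoeff

variable (x w : K)

lemma zCoeff_eq_zero_of_lt {b n : ℕ} (h : b < n) : zCoeff x w b n = 0 := by
  simp [zCoeff, gaussBinom_eq_zero_of_lt _ h]

lemma zCoeff_succ_zero (b : ℕ) :
    zCoeff x w (b + 1) 0 = zCoeff x w b 0 * (1 - x / q ^ (2 * b)) := by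
  simp [zCoeff, poch_succ, pow_mul, div_eq_mul_inv]

lemma zCoeff_succ_right_mul {b n : ℕ} (h : n ≤ b) :
    zCoeff x w b (n + 1) * (1 / q ^ (2 * (n + 1)) - x / q ^ (2 * b)) =
      (-1) ^ (n + 1) * (q ^ (n * (n + 1)) / q ^ (2 * n * b) / q ^ (2 * b))
        * gaussBinom (q ^ 2) b (n + 1) * poch x (q ^ 2)⁻¹ (b - n)
        * poch (w * q ^ 2 / q ^ (2 * b)) (q ^ 2) (n + 1) := by
  have hq := q_ne_zero
  obtain ⟨m, rfl⟩ := Nat.exists_eq_add_of_le h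
  obtain _ | m := m
  · simp [zCoeff, gaussBinom_eq_zero_of_lt]
  · rw [zCoeff, show n + (m + 1) - n = m + 1 by lia, show n + (m + 1) - (n + 1) = m by lia,
      poch_succ x, inv_pow]
    field_simp
    ring

lemma zCoeff_succ_succ {b n : ℕ} (h : n ≤ b) :
    zCoeff x w (b + 1) (n + 1) =
      zCoeff x w b (n + 1) * (1 / q ^ (2 * (n + 1)) - x / q ^ (2 * b))
        - zCoeff x w b n * (1 / q ^ (2 * n) - w / q ^ (4 * b)) := by
  have hq := q_ne_zero
  obtain ⟨m, hb⟩ := Nat.exists_eq_add_of_le h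
  have hpascal := gaussBinom_succ_succ (q ^ 2) b n
  have hpascal' : gaussBinom (q ^ 2) (b + 1) (n + 1) =
      gaussBinom (q ^ 2) b (n + 1) + q ^ (2 * b) / q ^ (2 * n) * gaussBinom (q ^ 2) b n := by
    rw [hb, gaussBinom_succ_succ', mul_add, pow_add, pow_mul q 2 m]
    field_simp
  have hw : w * q ^ 2 / q ^ (2 * (b + 1)) * q ^ 2 = w * q ^ 2 / q ^ (2 * b) := by
    field_simp
    ring
  have hpower : q ^ ((n + 1) * (n + 1 + 1)) / q ^ (2 * (n + 1) * (b + 1)) =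
      q ^ (n * (n + 1)) / q ^ (2 * n * b) / q ^ (2 * b) := by
    field_simp
    ring
  rw [zCoeff_succ_right_mul x w h, zCoeff, zCoeff, poch_succ' _ _ n, hw, poch_succ _ _ n, hpower,
    show b + 1 - (n + 1) = b - n by lia]
  generalize poch (w * q ^ 2 / q ^ (2 * b)) (q ^ 2) n = D, poch x (q ^ 2)⁻¹ (b - n) = E,
    q ^ (n * (n + 1)) / q ^ (2 * n * b) = T
  -- Both sides are affine in `w`: compare the constant and the linear coefficients.
  linear_combination (norm := skip)
    (-1) ^ n * T * E * D / q ^ (2 * b) * (w / q ^ (2 * b) * hpascal - hpascal')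
  field_simp
  ring

lemma sum_zCoeff_succ_mul_pow (b : ℕ) (z : K) :
    ∑ n ∈ Finset.range (b + 2), zCoeff x w (b + 1) n * z ^ n =
      ∑ n ∈ Finset.range (b + 1), zCoeff x w b n * (1 / q ^ (2 * n) - x / q ^ (2 * b)
        - z * (1 / q ^ (2 * n) - w / q ^ (4 * b))) * z ^ n := by
  set f : ℕ → K := fun n => zCoeff x w b n * (1 / q ^ (2 * n) - x / q ^ (2 * b)) * z ^ n with hf
  have hshift : ∑ n ∈ Finset.range (b + 1), f (n + 1) + f 0 = ∑ n ∈ Finset.range (b + 1), f n := by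
    rw [← Finset.sum_range_succ', Finset.sum_range_succ, add_eq_left]
    simp [hf, zCoeff_eq_zero_of_lt]
  calc ∑ n ∈ Finset.range (b + 2), zCoeff x w (b + 1) n * z ^ n
      = ∑ n ∈ Finset.range (b + 1), (f (n + 1)
          - z * (zCoeff x w b n * (1 / q ^ (2 * n) - w / q ^ (4 * b)) * z ^ n)) + f 0 := by
        rw [Finset.sum_range_succ']
        congr 1
        · refine Finset.sum_congr rfl fun n hn => ?_
          rw [zCoeff_succ_succ x w (Finset.mem_range_succ_iff.mp hn)]
          ring
        · simp [hf, zCoeff_succ_zero]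
    _ = _ := by
        rw [Finset.sum_sub_distrib, sub_add_eq_add_sub, hshift, ← Finset.sum_sub_distrib]
        exact Finset.sum_congr rfl fun n _ => by ring

end ZCoeff

lemma aeval_P_succ (b : ℕ) (x y z : K) :
    aeval ![x, y, z] (P (b + 1)) =
      (1 - z) * aeval ![x, y, z / q ^ 2] (P b)
        - x / q ^ (2 * b) * (1 - y * z / q ^ (2 * b)) * aeval ![x, y, z] (P b) := by
  have hsubst : (aeval ![x, y, z]).comp (aeval ![(X 0 : P3), X 1, C (q ^ (-2 : ℤ)) * X 2]) =
      aeval ![x, y, z / q ^ 2] := by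
    ext t
    fin_cases t <;> simp [div_eq_inv_mul, zpow_ofNat]
  have hpow : q ^ (-2 * (b : ℤ)) = (q ^ (2 * b))⁻¹ := by
    rw [neg_mul, zpow_neg]
    norm_cast
  simp only [P, map_sub, map_mul, map_one, aeval_X, aeval_C, ← AlgHom.comp_apply, hsubst, hpow,
    Algebra.algebraMap_self, RingHom.id_apply, Matrix.cons_val]
  ring

theorem aeval_P (b : ℕ) (x y z : K) :
    aeval ![x, y, z] (P b) = ∑ n ∈ Finset.range (b + 1), zCoeff x (x * y) b n * z ^ n := by
  induction b generalizing z with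
  | zero => simp [P, zCoeff]
  | succ b ih =>
    rw [aeval_P_succ, ih, ih, sum_zCoeff_succ_mul_pow, Finset.mul_sum, Finset.mul_sum,
      ← Finset.sum_sub_distrib]
    refine Finset.sum_congr rfl fun n _ => ?_
    rw [div_pow, ← pow_mul]
    ring

lemma zCoeff_q_pow_eq_zero (w : K) {b i n : ℕ} (h : i < b - n) :
    zCoeff (q ^ (2 * i)) w b n = 0 := by
  rw [zCoeff, pow_mul q 2 i, poch_pow_inv_eq_zero (pow_ne_zero 2 q_ne_zero) h, mul_zero, zero_mul]

lemma zCoeff_q_pow (a n μ d : ℕ) :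
    zCoeff (q ^ (2 * (μ + d))) (q ^ (2 * (a + (n + μ)))) (n + μ) n =
      (-1) ^ n * q ^ ((n : ℤ) * (1 - n - 2 * μ)) * q2p (n + μ)
        * (q2p (a + n) / (q2p n * q2p a)) * (q2p (μ + d) / (q2p μ * q2p d)) := by
  have hq := q_ne_zero
  have hx : poch (q ^ (2 * (μ + d))) (q ^ 2)⁻¹ μ * q2p d = q2p (μ + d) := by
    rw [pow_mul, add_comm]
    exact poch_pow_inv_mul_poch_self (pow_ne_zero 2 hq) d μ
  have hw : q2p a * poch (q ^ (2 * (a + (n + μ))) * q ^ 2 / q ^ (2 * (n + μ))) (q ^ 2) n =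
      q2p (a + n) := by
    rw [q2p, q2p, poch_add]
    congr 2
    field_simp
    ring
  have hbinom : gaussBinom (q ^ 2) (n + μ) n * (q2p n * q2p μ) = q2p (n + μ) :=
    gaussBinom_mul_poch_mul_poch (q ^ 2) n μ
  have hpower : q ^ (n * (n + 1)) / q ^ (2 * n * (n + μ)) = q ^ ((n : ℤ) * (1 - n - 2 * μ)) := by
    rw [← zpow_natCast, ← zpow_natCast, ← zpow_sub₀ hq]
    congr 1
    push_cast
    ring
  rw [zCoeff, Nat.add_sub_cancel_left, hpower, ← hx, ← hw, ← hbinom]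
  have := q2p_ne_zero a
  have := q2p_ne_zero n
  have := q2p_ne_zero μ
  have := q2p_ne_zero d
  field_simp

lemma aeval_P_q_pow (b i : ℕ) (y z : K) :
    aeval ![q ^ (2 * i), y, z] (P b) =
      ∑ μ ∈ Finset.range (min b i + 1),
        zCoeff (q ^ (2 * i)) (q ^ (2 * i) * y) b (b - μ) * z ^ (b - μ) := by
  rw [aeval_P, ← Finset.sum_range_reflect]
  refine (Finset.sum_subset (Finset.range_subset_range.mpr (by lia)) fun μ hμb hμi => ?_).symm
  rw [Finset.mem_range] at hμb hμi
  rw [zCoeff_q_pow_eq_zero _ (by lia), zero_mul]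

theorem aeval_P_q_pow_div_q2p (a b i : ℕ) (j : ℤ) (h : (a : ℤ) + b = i + j) (z : K) :
    aeval ![q ^ (2 * i), q ^ (2 * j), z] (P b) / q2p b =
      ∑ μ ∈ Finset.range (min b i + 1),
        (-1) ^ (b - μ) * q ^ (((b : ℤ) - μ) * (1 - b - μ)) * z ^ (b - μ)
          * (q2p (a + b - μ) / (q2p (b - μ) * q2p a))
          * (q2p i / (q2p μ * q2p (i - μ))) := by
  have hw : q ^ (2 * i) * q ^ (2 * j) = q ^ (2 * (a + b)) := by
    rw [← zpow_natCast, ← zpow_natCast, ← zpow_add₀ q_ne_zero]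
    congr 1
    push_cast
    linear_combination -2 * h
  rw [aeval_P_q_pow, hw, Finset.sum_div]
  refine Finset.sum_congr rfl fun μ hμ => ?_
  rw [Finset.mem_range] at hμ
  obtain ⟨n, rfl⟩ := Nat.exists_eq_add_of_le' (show μ ≤ b by lia)
  obtain ⟨d, rfl⟩ := Nat.exists_eq_add_of_le (show μ ≤ i by lia)
  have hexp : (((n + μ : ℕ) : ℤ) - μ) * (1 - (n + μ : ℕ) - μ) = n * (1 - n - 2 * μ) := by
    push_cast
    ring
  have := q2p_ne_zero (n + μ)
  rw [Nat.add_sub_cancel, Nat.add_sub_cancel_left, zCoeff_q_pow, hexp, ← add_assoc,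
    Nat.add_sub_cancel]
  field_simp

open Finset in
theorem P_matrix_element_general (a b i : ℕ) (c j k : ℤ) (h1 : (a : ℤ) + b = i + j)
    (h2 : b + c = j + k) :
    q ^ ((a - j) * (c - j)) * aeval (![q ^ (2 * i), q ^ (2 * j), q ^ (2 * k)] : Fin 3 → K) (P b)
        / q2p b =
      ∑ μ ∈ range (min b i + 1),
        (-1 : K) ^ (b - μ)
          * q ^ ((i : ℤ) * k + b + ((b : ℤ) - μ) * (c - a) + (μ : ℤ) * (μ - i - k - 1))
          * (q2p (a + b - μ) / (q2p (b - μ) * q2p a))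
          * (q2p i / (q2p μ * q2p (i - μ))) := by
  rw [mul_div_assoc, aeval_P_q_pow_div_q2p a b i j h1, mul_sum]
  refine sum_congr rfl fun μ hμ => ?_
  have hμb : μ ≤ b := by grind
  have hpower : q ^ ((i : ℤ) * k + b + ((b : ℤ) - μ) * (c - a) + (μ : ℤ) * (μ - i - k - 1)) =
      q ^ ((a - j) * (c - j)) * (q ^ (((b : ℤ) - μ) * (1 - b - μ)) * (q ^ (2 * k)) ^ (b - μ)) := by
    rw [← zpow_natCast (q ^ (2 * k)), ← zpow_mul, ← zpow_add₀ q_ne_zero, ← zpow_add₀ q_ne_zero,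
      Nat.cast_sub hμb]
    congr 1
    obtain rfl : c = j + k - b := by linarith
    obtain rfl : j = a + b - i := by linarith
    ring
  rw [hpower]
  ring

open Finset in
/-- for `a + b = i + j` and `b + c = j + k`,
`q^{(a−j)(c−j)} P_b(q^{2i},q^{2j},q^{2k}) / (q²;q²)_b` equals the stated sum over
`μ = 0, …, min(b,i)`. -/
theorem P_matrix_element (a b c i j k : ℕ) (h1 : a + b = i + j) (h2 : b + c = j + k) :
    q ^ (((a : ℤ) - (j : ℤ)) * ((c : ℤ) - (j : ℤ)))
        * aeval (![q ^ (2 * i), q ^ (2 * j), q ^ (2 * k)] : Fin 3 → K) (P b) / q2p b =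
      ∑ μ ∈ range (min b i + 1),
        (-1 : K) ^ (b - μ)
          * q ^ ((i : ℤ) * (k : ℤ) + (b : ℤ)
                  + ((b : ℤ) - (μ : ℤ)) * ((c : ℤ) - (a : ℤ))
                  + (μ : ℤ) * ((μ : ℤ) - (i : ℤ) - (k : ℤ) - 1))
          * (q2p (a + b - μ) / (q2p (b - μ) * q2p a))
          * (q2p i / (q2p μ * q2p (i - μ))) :=
  P_matrix_element_general a b i c j k (mod_cast h1) (mod_cast h2)
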